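/- arXiv:1010.1709 — 2 statements merged into one kernel-verified Lean document; each statement's English description precedes it below -/
import Mathlib

section
/- Fix a vertex of the complete graph K₄. The number of closed walks based at that vertex which have length exactly 10, have no backtracking (no two consecutive darts are reverses of each other), and are balanced (for every dart d, the number of occurrences of d among the darts equals the number of occurrences of the reversed dart of d) is exactly 30. -/
/-- The complete graph on four vertices (`Fin 4`). -/
abbrev GyrK4 : SimpleGraph (Fin 4) := ⊤

/-- Nonbacktracking walks to `v`, encoded by the list of vertices after the current one `u`,
where `a` is the previous vertex. -/
def gyrOk (v : Fin 4) : Fin 4 → Fin 4 → List (Fin 4) → Prop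
  | _, u, [] => u = v
  | a, u, x :: l => x ≠ u ∧ x ≠ a ∧ gyrOk v u x l

/-- Enumeration of the encoded walks of length `n`. -/
def gyrGen (v : Fin 4) : ℕ → Fin 4 → Fin 4 → List (List (Fin 4))
  | 0, _, u => if u = v then [[]] else []
  | n + 1, a, u => ([0, 1, 2, 3].filter (fun x => x ≠ u ∧ x ≠ a)).flatMap
      (fun x => (gyrGen v n u x).map (fun l => x :: l))

theorem mem_gyrGen (v : Fin 4) (n : ℕ) (a u : Fin 4) (l : List (Fin 4)) :
    l ∈ gyrGen v n a u ↔ l.length = n ∧ gyrOk v a u l := by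
  induction n generalizing a u l with
  | zero =>
    by_cases h : u = v <;> cases l <;> simp [gyrGen, gyrOk, h]
  | succ n ih =>
    have h4 : ∀ x : Fin 4, x ∈ ([0, 1, 2, 3] : List (Fin 4)) := by decide
    cases l with
    | nil => simp [gyrGen]
    | cons y l =>
      simp only [gyrGen, List.mem_flatMap, List.mem_filter, List.mem_map, ih, gyrOk, h4,
        List.length_cons, decide_eq_true_eq, true_and, List.cons.injEq]
      constructor
      · rintro ⟨x, ⟨h1, h2⟩, l', ⟨h3, h5⟩, rfl, rfl⟩
        exact ⟨by omega, h1, h2, h5⟩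
      · rintro ⟨h1, h2, h3, h5⟩
        exact ⟨y, ⟨h2, h3⟩, l, ⟨by omega, h5⟩, rfl, rfl⟩

/-- The encoded walk (all vertices listed) is balanced. -/
def gyrBal (l : List (Fin 4)) : Prop :=
  ∀ a b : Fin 4, (l.zip l.tail).count (a, b) = (l.zip l.tail).count (b, a)

instance : DecidablePred gyrBal := fun l => by unfold gyrBal; infer_instance

theorem gyr_darts_zip {u w : Fin 4} (p : GyrK4.Walk u w) :
    p.darts.map (fun d => d.toProd) = p.support.zip p.support.tail := by
  induction p with
  | nil => simp
  | cons h q ih =>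
    cases q with
    | nil => simp
    | cons h' q' => simpa using ih

theorem gyr_bal_iff {u w : Fin 4} (p : GyrK4.Walk u w) :
    (∀ d : GyrK4.Dart, p.darts.count d = p.darts.count d.symm) ↔ gyrBal p.support := by
  have hinj : Function.Injective (fun d : GyrK4.Dart => d.toProd) :=
    SimpleGraph.Dart.toProd_injective
  have key : ∀ d : GyrK4.Dart,
      p.darts.count d = (p.support.zip p.support.tail).count d.toProd := by
    intro d
    rw [← gyr_darts_zip]
    exact (List.count_map_of_injective _ _ hinj d).symm
  constructor
  · intro h a b
    by_cases hab : a = b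
    · rw [hab]
    · have := h ⟨(a, b), hab⟩
      rw [key, key] at this
      exact this
  · intro h d
    rw [key, key]
    exact h d.fst d.snd

theorem gyr_ok_iff {u w : Fin 4} (p : GyrK4.Walk u w) (a : Fin 4) :
    gyrOk w a u p.support.tail ↔
      p.darts.IsChain (fun d d' => d' ≠ d.symm) ∧ ∀ d ∈ p.darts.head?, d.snd ≠ a := by
  induction p generalizing a with
  | nil => simp [gyrOk]
  | @cons u x w h q ih =>
    have hx : x ≠ u := fun e => h.ne e.symm
    have hs : (SimpleGraph.Walk.cons h q).support.tail = x :: q.support.tail := by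
      cases q <;> simp
    rw [hs, gyrOk, ih]
    cases q with
    | nil => simp [hx]
    | @cons _ y _ h' q' =>
      simp only [SimpleGraph.Walk.darts_cons, List.isChain_cons_cons, List.head?_cons,
        Option.mem_some_iff, forall_eq']
      simp only [ne_eq, SimpleGraph.Dart.ext_iff,
        SimpleGraph.Dart.symm_mk, Prod.swap, Prod.mk.injEq, true_and, hx, not_false_eq_true]
      tauto

theorem gyr_exists (w : Fin 4) (l : List (Fin 4)) (a u : Fin 4) (h : gyrOk w a u l) :
    ∃ p : GyrK4.Walk u w, p.support = u :: l := by
  induction l generalizing a u with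
  | nil =>
    simp only [gyrOk] at h
    subst h
    exact ⟨SimpleGraph.Walk.nil, by simp⟩
  | cons x l ih =>
    obtain ⟨h1, _, h3⟩ := h
    obtain ⟨q, hq⟩ := ih _ _ h3
    exact ⟨SimpleGraph.Walk.cons (fun e => h1 e.symm) q, by simp [hq]⟩

theorem gyr_count : ∀ v : Fin 4,
    ((gyrGen v 10 v v).filter (fun l => gyrBal (v :: l))).toFinset.card = 30 := by
  decide +kernel

/-- For any fixed vertex of `K₄`, the number of closed walks based at
that vertex of length exactly `10`, with no backtracking (no two consecutive darts are
reverses of each other) and balanced (every dart occurs as often as its reverse),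
is exactly `30`. -/
theorem gyroid_count_minimal_loops (v : Fin 4) :
    Nat.card {p : GyrK4.Walk v v //
        p.length = 10 ∧
        p.darts.Chain' (fun d d' => d' ≠ d.symm) ∧
        ∀ d : GyrK4.Dart, p.darts.count d = p.darts.count d.symm} = 30 := by
  have hsupp : ∀ p : GyrK4.Walk v v, p.support = v :: p.support.tail := fun p => by
    cases p <;> simp
  have hmem : ∀ p : GyrK4.Walk v v,
      p.support.tail ∈ ((gyrGen v 10 v v).filter (fun l => gyrBal (v :: l))).toFinset ↔
      (p.length = 10 ∧ p.darts.IsChain (fun d d' => d' ≠ d.symm) ∧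
        ∀ d : GyrK4.Dart, p.darts.count d = p.darts.count d.symm) := by
    intro p
    have hhead : ∀ d ∈ p.darts.head?, d.snd ≠ v := by
      cases p with
      | nil => simp
      | cons h q =>
        intro d hd
        simp only [SimpleGraph.Walk.darts_cons, List.head?_cons, Option.mem_some_iff] at hd
        subst hd
        exact fun e => h.ne e.symm
    rw [List.mem_toFinset, List.mem_filter, mem_gyrGen, gyr_ok_iff, gyr_bal_iff,
      decide_eq_true_eq, ← hsupp]
    simp only [List.length_tail, SimpleGraph.Walk.length_support, Nat.add_sub_cancel]
    tauto
  rw [← gyr_count v, ← Nat.card_eq_finsetCard]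
  refine Nat.card_eq_of_bijective (fun p => ⟨p.1.support.tail, (hmem p.1).2 p.2⟩) ⟨?_, ?_⟩
  · intro p q h
    have h' : p.1.support.tail = q.1.support.tail := congrArg Subtype.val h
    apply Subtype.ext
    apply SimpleGraph.Walk.ext_support
    rw [hsupp p.1, hsupp q.1, h']
  · rintro ⟨l, hl⟩
    have hl' := hl
    rw [List.mem_toFinset, List.mem_filter, mem_gyrGen] at hl'
    obtain ⟨p, hp⟩ := gyr_exists v l v v hl'.1.2
    have ht : p.support.tail = l := by rw [hp, List.tail_cons]
    exact ⟨⟨p, (hmem p).1 (ht ▸ hl)⟩, Subtype.ext ht⟩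
end

section
/- Let L_bcc be the additive subgroup of ℝ³ generated by (1,0,0), (0,1,0), and (1/2,1/2,1/2) (the body centered cubic lattice). For indices i, j ∈ {0,…,7}, one has vᵢ − vⱼ ∈ L_bcc if and only if i = j or {i,j} is one of the four pairs {0,6}, {1,7}, {2,4}, {3,5}. In particular, the eight Gyroid vertices fall into exactly four translation classes modulo L_bcc, represented by v₀, v₁, v₂, v₃. -/
/-- The eight Gyroid vertices `v₀,…,v₇` in `ℝ³`. -/
noncomputable def gyrV : Fin 8 → (Fin 3 → ℝ) :=
  ![![5/8, 5/8, 5/8],   -- v₀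
    ![3/8, 7/8, 5/8],   -- v₁
    ![3/8, 1/8, 7/8],   -- v₂
    ![5/8, 3/8, 7/8],   -- v₃
    ![7/8, 5/8, 3/8],   -- v₄
    ![1/8, 7/8, 3/8],   -- v₅
    ![1/8, 1/8, 1/8],   -- v₆
    ![7/8, 3/8, 1/8]]   -- v₇

/-- The body centered cubic lattice: the additive subgroup of `ℝ³` generated by
`(1,0,0)`, `(0,1,0)` and `(1/2,1/2,1/2)`. -/
noncomputable def Lbcc : AddSubgroup (Fin 3 → ℝ) :=
  AddSubgroup.closure {![1, 0, 0], ![0, 1, 0], ![1/2, 1/2, 1/2]}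

/-- Numerators of the vertices over the common denominator `8`. -/
def gyrW : Fin 8 → (Fin 3 → ℤ) :=
  ![![5, 5, 5], ![3, 7, 5], ![3, 1, 7], ![5, 3, 7],
    ![7, 5, 3], ![1, 7, 3], ![1, 1, 1], ![7, 3, 1]]

theorem gyrV_eq (i : Fin 8) (k : Fin 3) : gyrV i k = (gyrW i k : ℝ) / 8 := by
  fin_cases i <;> fin_cases k <;> simp [gyrV, gyrW]

theorem mem_Lbcc_iff (x : Fin 3 → ℝ) :
    x ∈ Lbcc ↔ ∃ a b c : ℤ, x 0 = a + c / 2 ∧ x 1 = b + c / 2 ∧ x 2 = c / 2 := by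
  constructor
  · intro h
    unfold Lbcc at h
    induction h using AddSubgroup.closure_induction with
    | mem x hx =>
      rcases hx with rfl | rfl | rfl
      · exact ⟨1, 0, 0, by simp⟩
      · exact ⟨0, 1, 0, by simp⟩
      · exact ⟨0, 0, 1, by simp⟩
    | zero => exact ⟨0, 0, 0, by simp⟩
    | add x y _ _ hx hy =>
      obtain ⟨a, b, c, h0, h1, h2⟩ := hx
      obtain ⟨ap, bp, cp, h0p, h1p, h2p⟩ := hy
      refine ⟨a + ap, b + bp, c + cp, ?_, ?_, ?_⟩ <;>
        simp only [Pi.add_apply, h0, h1, h2, h0p, h1p, h2p] <;> push_cast <;> ring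
    | neg x _ hx =>
      obtain ⟨a, b, c, h0, h1, h2⟩ := hx
      refine ⟨-a, -b, -c, ?_, ?_, ?_⟩ <;>
        simp only [Pi.neg_apply, h0, h1, h2] <;> push_cast <;> ring
  · rintro ⟨a, b, c, h0, h1, h2⟩
    have hx : x = a • ![1, 0, 0] + b • ![0, 1, 0] + c • ![1/2, 1/2, 1/2] := by
      ext k
      fin_cases k <;> simp [h0, h1, h2] <;> ring
    rw [hx]
    unfold Lbcc
    refine add_mem (add_mem ?_ ?_) ?_ <;>
      exact zsmul_mem (AddSubgroup.subset_closure (by simp)) _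

theorem gyr_mem_iff (i j : Fin 8) :
    gyrV i - gyrV j ∈ Lbcc ↔
      (gyrW i 2 - gyrW j 2) % 4 = 0 ∧
      ((gyrW i 0 - gyrW j 0) - (gyrW i 2 - gyrW j 2)) % 8 = 0 ∧
      ((gyrW i 1 - gyrW j 1) - (gyrW i 2 - gyrW j 2)) % 8 = 0 := by
  rw [mem_Lbcc_iff]
  simp only [Pi.sub_apply, gyrV_eq]
  generalize gyrW i 0 = p0, gyrW i 1 = p1, gyrW i 2 = p2
  generalize gyrW j 0 = q0, gyrW j 1 = q1, gyrW j 2 = q2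
  constructor
  · rintro ⟨a, b, c, h0, h1, h2⟩
    have e0 : p0 - q0 = 8 * a + 4 * c := by
      have : (p0 : ℝ) - q0 = 8 * a + 4 * c := by linarith
      exact_mod_cast this
    have e1 : p1 - q1 = 8 * b + 4 * c := by
      have : (p1 : ℝ) - q1 = 8 * b + 4 * c := by linarith
      exact_mod_cast this
    have e2 : p2 - q2 = 4 * c := by
      have : (p2 : ℝ) - q2 = 4 * c := by linarith
      exact_mod_cast this
    omega
  · rintro ⟨h2, h0, h1⟩
    obtain ⟨c, hc⟩ := Int.dvd_of_emod_eq_zero h2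
    obtain ⟨a, ha⟩ := Int.dvd_of_emod_eq_zero h0
    obtain ⟨b, hb⟩ := Int.dvd_of_emod_eq_zero h1
    have hcp : (p2 : ℝ) - q2 = 4 * c := by exact_mod_cast hc
    have hap : (p0 : ℝ) - q0 - (p2 - q2) = 8 * a := by exact_mod_cast ha
    have hbp : (p1 : ℝ) - q1 - (p2 - q2) = 8 * b := by exact_mod_cast hb
    exact ⟨a, b, c, by linarith, by linarith, by linarith⟩

/-- For `i, j ∈ {0,…,7}`, `vᵢ − vⱼ ∈ L_bcc` iff `i = j` or `{i,j}` is one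
of the four pairs `{0,6}, {1,7}, {2,4}, {3,5}`; in particular the eight Gyroid vertices
fall into exactly four translation classes modulo `L_bcc`, represented by `v₀, v₁, v₂, v₃`. -/
theorem gyroid_bcc_classes :
    (∀ i j : Fin 8,
      gyrV i - gyrV j ∈ Lbcc ↔
        i = j ∨ ({i, j} : Finset (Fin 8)) ∈
          ({{0, 6}, {1, 7}, {2, 4}, {3, 5}} : Finset (Finset (Fin 8)))) ∧
    (∀ i : Fin 8, ∃! j : Fin 4, gyrV i - gyrV (Fin.castLE (by norm_num) j) ∈ Lbcc) := by
  simp only [gyr_mem_iff]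
  constructor
  · decide
  · unfold ExistsUnique
    decide
end
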